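/- Let X be a Banach space and f, g ∈ Γ₀(X) such that ∂f(x) ⊆ ∂g(x) for all x ∈ X. Then there exists a constant c ∈ ℝ such that g = f + c (i.e., f and g coincide up to an additive constant). -/

import Mathlib

/-!
The idea is to replace `f` and `g` by their Moreau envelopes
`f_N w = inf_u (f u + N ‖w - u‖²)`, which are finite everywhere, show that the envelopes have equal
increments, and let `N → ∞`.

Fix `z` and `N`. Ekeland's principle (`ekeland`) yields a point `y` at which
`f + N ‖z - ·‖² + ε ‖· - y‖` attains its minimum, and the sum rule
(`exists_subgradient_of_min`, a Hahn–Banach separation) splits the optimality condition there into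
a subgradient `p ∈ ∂f(y)` and an approximate subgradient `-p` of the quadratic term. Adding the two
inequalities shows that `p` is an approximate subgradient of `f_N` at `z`. By hypothesis
`p ∈ ∂g(y)`, and the same addition shows that `p` is an approximate subgradient of `g_N` at the same
`z` (`ConvexLsc.envelope_slope`). The error is uniform on bounded sets because near-minimisers in
the definition of the envelopes stay bounded (`ConvexLsc.exists_radius`).

So along any segment `f_N` and `g_N` have common approximate slopes. On a subdivision with `n` steps
the increments of the two differ by at most `1/n` times the telescoping sum of the slope
differences, hence coincide (`increments_eq`, `envelope_sub_eq`). Finally `f_N → f` and `g_N → g`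
pointwise, also where the value is `+∞` (`ConvexLsc.exists_le_envelope`), so `g - f` is constant
(`le_of_envelope_sub_eq`). No density of the domain of `∂f` and no biconjugation is needed.

Inside the proof a function of class `Γ₀(X)` is handled as a pair `(D, F)`: its effective domain and
its real values there, so that all estimates take place in `ℝ`.
-/

open Filter Set Topology Pointwise

noncomputable section

/-- Convexity for extended-real-valued functions. -/
def IsConvexE {Z : Type*} [AddCommGroup Z] [Module ℝ Z] (h : Z → EReal) : Prop :=
  ∀ x y : Z, ∀ a b : ℝ, 0 < a → 0 < b → a + b = 1 →
    h (a • x + b • y) ≤ (a : EReal) * h x + (b : EReal) * h y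

variable (X : Type*) [NormedAddCommGroup X] [NormedSpace ℝ X] [CompleteSpace X]

/-- The Fenchel conjugate `f*(x*) = sup_{x ∈ X} (⟨x*, x⟩ - f x)` on the dual. -/
def conj (f : X → EReal) (y : X →L[ℝ] ℝ) : EReal :=
  ⨆ x : X, ((y x : EReal) - f x)

/-- The `ε`-subdifferential (empty when `ε < 0` or `f x ∉ ℝ`); `∂f(x) := ∂_0 f(x)`. -/
def esub (f : X → EReal) (ε : ℝ) (x : X) : Set (X →L[ℝ] ℝ) :=
  {y | 0 ≤ ε ∧ f x ≠ ⊤ ∧ f x ≠ ⊥ ∧ conj X f y + f x ≤ (y x : EReal) + (ε : EReal)}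

/-! ### Ekeland's principle, the sum rule, and integration on an interval -/

/-- Ekeland's variational principle, stated on a closed subset of `X × ℝ` (in practice an
epigraph), so that no extended-real arithmetic is involved. -/
theorem ekeland {X : Type*} [MetricSpace X] [CompleteSpace X] {E : Set (X × ℝ)}
    (hE : IsClosed E) {m : ℝ} (hm : ∀ q ∈ E, m ≤ q.2) {q₀ : X × ℝ} (hq₀ : q₀ ∈ E)
    {ε : ℝ} (hε : 0 < ε) :
    ∃ q ∈ E, q.2 ≤ q₀.2 ∧ ∀ u ∈ E, q.2 ≤ u.2 + ε * dist u.1 q.1 := by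
  -- `u` lies below `q` when `u.2 + ε * dist u.1 q.1 ≤ q.2`; each step nearly minimises the
  -- second coordinate among the points below the current one.
  have next : ∀ (k : ℕ) (q : E), ∃ q' : E, q'.1.2 + ε * dist q'.1.1 q.1.1 ≤ q.1.2 ∧
      ∀ u ∈ E, u.2 + ε * dist u.1 q.1.1 ≤ q.1.2 → q'.1.2 ≤ u.2 + 1 / ((k : ℝ) + 1) := by
    intro k q
    set S : Set ℝ := Prod.snd '' {u | u ∈ E ∧ u.2 + ε * dist u.1 q.1.1 ≤ q.1.2} with hS
    have hSne : S.Nonempty := ⟨q.1.2, q.1, ⟨q.2, by simp⟩, rfl⟩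
    have hSb : BddBelow S := by
      refine ⟨m, ?_⟩
      rintro _ ⟨u, ⟨hu, -⟩, rfl⟩
      exact hm u hu
    have hpos : (0 : ℝ) < 1 / ((k : ℝ) + 1) := by positivity
    obtain ⟨_, ⟨q', ⟨hq'E, hq'⟩, rfl⟩, hlt⟩ :=
      exists_lt_of_csInf_lt hSne (lt_add_of_pos_right (sInf S) hpos)
    refine ⟨⟨q', hq'E⟩, hq', fun u hu hu' => ?_⟩
    have := csInf_le hSb (⟨u, ⟨hu, hu'⟩, rfl⟩ : u.2 ∈ S)
    linarith
  choose nx hnx1 hnx2 using next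
  let s : ℕ → E := fun k => Nat.rec ⟨q₀, hq₀⟩ (fun k q => nx k q) k
  have hs : ∀ k, s (k + 1) = nx k (s k) := fun k => rfl
  have hchain : ∀ i j, i ≤ j → (s j).1.2 + ε * dist (s j).1.1 (s i).1.1 ≤ (s i).1.2 := by
    intro i j hij
    induction j, hij using Nat.le_induction with
    | base => simp
    | succ j _ ih =>
      have h1 := hnx1 j (s j)
      rw [← hs] at h1
      have h2 := dist_triangle (s (j + 1)).1.1 (s j).1.1 (s i).1.1
      nlinarith
  have hanti : Antitone fun k => (s k).1.2 := by
    intro i j hij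
    have h1 := hchain i j hij
    have h2 : 0 ≤ ε * dist (s j).1.1 (s i).1.1 := by positivity
    simp only
    linarith
  have hbdd : BddBelow (Set.range fun k => (s k).1.2) := by
    refine ⟨m, ?_⟩
    rintro _ ⟨k, rfl⟩
    exact hm _ (s k).2
  have hr := tendsto_atTop_ciInf hanti hbdd
  set r := ⨅ k, (s k).1.2 with hrdef
  have hrle : ∀ k, r ≤ (s k).1.2 := fun k => ciInf_le hbdd k
  have hcau : CauchySeq fun k => (s k).1.1 := by
    rw [Metric.cauchySeq_iff']
    intro η hη
    have hev : ∀ᶠ k in atTop, (s k).1.2 < r + ε * η :=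
      hr.eventually_lt_const (by have := mul_pos hε hη; linarith)
    obtain ⟨N, hN⟩ := hev.exists
    refine ⟨N, fun n hn => ?_⟩
    have h1 := hchain N n hn
    have h2 := hrle n
    exact lt_of_mul_lt_mul_left (by linarith) hε.le
  obtain ⟨x, hx⟩ := cauchySeq_tendsto_of_complete hcau
  have hlim : Tendsto (fun k => (s k).1) atTop (𝓝 (x, r)) := hx.prodMk_nhds hr
  have hmem : (x, r) ∈ E := hE.mem_of_tendsto hlim (Eventually.of_forall fun k => (s k).2)
  refine ⟨(x, r), hmem, hrle 0, fun u hu => ?_⟩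
  by_contra! hcon
  have hbelow : ∀ k, r + ε * dist x (s k).1.1 ≤ (s k).1.2 := by
    intro k
    have ht : Tendsto (fun j => (s j).1.2 + ε * dist (s j).1.1 (s k).1.1) atTop
        (𝓝 (r + ε * dist x (s k).1.1)) :=
      hr.add ((hx.dist tendsto_const_nhds).const_mul ε)
    exact le_of_tendsto ht (eventually_atTop.2 ⟨k, fun j hj => hchain k j hj⟩)
  have hle : ∀ k : ℕ, r ≤ u.2 + 1 / ((k : ℝ) + 1) := by
    intro k
    have h1 := hnx2 k (s k) u hu (by
      have h2 := dist_triangle u.1 x (s k).1.1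
      have h3 := hbelow k
      simp only at hcon
      nlinarith)
    exact (hrle (k + 1)).trans h1
  have hru : r ≤ u.2 := by
    have ht : Tendsto (fun k : ℕ => u.2 + 1 / ((k : ℝ) + 1)) atTop (𝓝 (u.2 + 0)) :=
      tendsto_const_nhds.add tendsto_one_div_add_atTop_nhds_zero_nat
    rw [add_zero] at ht
    exact ge_of_tendsto' ht hle
  have : 0 ≤ ε * dist u.1 x := by positivity
  simp only at hcon
  linarith

/-- Moreau–Rockafellar at a minimiser: if `y` minimises `F + H` with `H` continuous, then the
epigraph of `F` and the strict hypograph of `F y + H y - H` are separated by the graph of an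
affine function, whose slope is the subgradient sought. -/
theorem exists_subgradient_of_min {X : Type*} [NormedAddCommGroup X] [NormedSpace ℝ X]
    {D : Set X} {F H : X → ℝ} (hF : ConvexOn ℝ D F) (hH : ConvexOn ℝ univ H)
    (hHc : Continuous H) {y : X} (hy : y ∈ D) (hmin : ∀ u ∈ D, F y + H y ≤ F u + H u) :
    ∃ p : X →L[ℝ] ℝ, (∀ u ∈ D, F y + p (u - y) ≤ F u) ∧ ∀ u, H y - p (u - y) ≤ H u := by
  set O : Set (X × ℝ) := {q | q.1 ∈ univ ∧ q.2 < F y + H y - H q.1} with hO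
  have hOc : Convex ℝ O :=
    ((concaveOn_const (F y + H y) convex_univ).sub hH).convex_strict_hypograph
  have hOo : IsOpen O := by
    have : O = {q | q.2 < F y + H y - H q.1} := by simp [hO]
    rw [this]
    exact isOpen_lt continuous_snd (by fun_prop)
  have hdis : Disjoint O {q : X × ℝ | q.1 ∈ D ∧ F q.1 ≤ q.2} := by
    rw [Set.disjoint_left]
    rintro q ⟨-, h1⟩ ⟨h2, h3⟩
    have := hmin q.1 h2
    linarith
  obtain ⟨l, c, hl1, hl2⟩ := geometric_hahn_banach_open hOc hOo hF.convex_epigraph hdis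
  have hsplit : ∀ (u : X) (s : ℝ), l (u, s) = l (u, 0) + s * l (0, 1) := by
    intro u s
    have : ((u, s) : X × ℝ) = (u, 0) + s • (0, 1) := by simp
    rw [this, map_add, map_smul, smul_eq_mul]
  set β := l (0, 1) with hβ
  have hyc : c ≤ l (y, 0) + F y * β := by
    rw [← hsplit]; exact hl2 (y, F y) ⟨hy, le_rfl⟩
  have hβpos : 0 < β := by
    have h1 := hl1 (y, F y - 1) ⟨mem_univ _, by simp only; linarith⟩
    rw [hsplit] at h1
    nlinarith
  have hO' : ∀ u, l (u, 0) + (F y + H y - H u) * β ≤ c := by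
    intro u
    refine le_of_forall_pos_lt_add fun δ hδ => ?_
    have h1 := hl1 (u, F y + H y - H u - δ / β)
      ⟨mem_univ _, by have := div_pos hδ hβpos; simp only; linarith⟩
    rw [hsplit, sub_mul, div_mul_cancel₀ _ hβpos.ne'] at h1
    linarith
  let p : X →L[ℝ] ℝ := (-β⁻¹) • (l.comp (ContinuousLinearMap.inl ℝ X ℝ))
  have hp : ∀ u, p u * β = - l (u, 0) := by
    intro u
    simp only [p, _root_.smul_apply, ContinuousLinearMap.comp_apply,
      ContinuousLinearMap.inl_apply, smul_eq_mul]
    field_simp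
  have hyc' := hO' y
  refine ⟨p, fun u hu => ?_, fun u => ?_⟩
  · have h1 := hl2 (u, F u) ⟨hu, le_rfl⟩
    rw [hsplit] at h1
    refine le_of_mul_le_mul_right ?_ hβpos
    rw [map_sub, add_mul, sub_mul, hp, hp]
    linarith
  · have h1 := hO' u
    refine le_of_mul_le_mul_right ?_ hβpos
    rw [map_sub, sub_mul, sub_mul, hp, hp]
    linarith

/-- Integration on an interval: the two functions share approximate slopes at each point of a
subdivision, so over each step their increments differ by at most the increase of the slope
times the mesh, and these bounds telescope. -/
theorem increments_eq {F G : ℝ → ℝ}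
    (h : ∀ ε > 0, ∀ t ∈ Icc (0 : ℝ) 1, ∃ s : ℝ, ∀ τ ∈ Icc (-1 : ℝ) 2,
      F t + s * (τ - t) ≤ F τ + ε ∧ G t + s * (τ - t) ≤ G τ + ε) :
    F 1 - F 0 = G 1 - G 0 := by
  set C := F 2 - F 1 - (F 0 - F (-1)) + 4 with hC
  have key : ∀ n : ℕ, 0 < n → |(F 1 - F 0) - (G 1 - G 0)| ≤ C * (1 / (n : ℝ)) := by
    intro n hn
    have hn' : (0 : ℝ) < n := by exact_mod_cast hn
    have hn1 : (1 : ℝ) ≤ n := by exact_mod_cast hn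
    set δ : ℝ := 1 / n with hδ
    have hδ0 : 0 < δ := by positivity
    have hδ1 : δ ≤ 1 := by rw [hδ, div_le_one hn']; exact hn1
    have hnδ : (n : ℝ) * δ = 1 := by rw [hδ]; field_simp
    have hmem : ∀ i : ℕ, i ≤ n → (i : ℝ) * δ ∈ Icc (0 : ℝ) 1 := by
      intro i hi
      have : (i : ℝ) ≤ n := by exact_mod_cast hi
      exact ⟨by positivity, by nlinarith⟩
    have hex : ∀ i : ℕ, ∃ s : ℝ, i ≤ n → ∀ τ ∈ Icc (-1 : ℝ) 2,
        F (i * δ) + s * (τ - i * δ) ≤ F τ + δ ^ 2 ∧ G (i * δ) + s * (τ - i * δ) ≤ G τ + δ ^ 2 := by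
      intro i
      by_cases hi : i ≤ n
      · obtain ⟨s, hs⟩ := h (δ ^ 2) (by positivity) _ (hmem i hi)
        exact ⟨s, fun _ => hs⟩
      · exact ⟨0, fun h => absurd h hi⟩
    choose s hs using hex
    have hstep : ∀ i : ℕ, i ≤ n →
        |(F (i * δ) - F 0) - (G (i * δ) - G 0)| ≤ (s i - s 0) * δ + i * (2 * δ ^ 2) := by
      intro i
      induction i with
      | zero => intro _; simp
      | succ i ih =>
        intro hi
        have hi' : i ≤ n := by omega
        have IH := ih hi'
        have m1 := hmem i hi'
        have m2 := hmem (i + 1) hi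
        obtain ⟨a1, a2⟩ := hs i hi' (((i + 1 : ℕ) : ℝ) * δ) ⟨by linarith [m2.1], by linarith [m2.2]⟩
        obtain ⟨b1, b2⟩ := hs (i + 1) hi ((i : ℝ) * δ) ⟨by linarith [m1.1], by linarith [m1.2]⟩
        have e1 : ((i + 1 : ℕ) : ℝ) * δ - i * δ = δ := by push_cast; ring
        have e2 : (i : ℝ) * δ - ((i + 1 : ℕ) : ℝ) * δ = -δ := by push_cast; ring
        rw [e1] at a1 a2
        rw [e2] at b1 b2
        rw [abs_le] at IH ⊢
        have e3 : ((i + 1 : ℕ) : ℝ) * (2 * δ ^ 2) = i * (2 * δ ^ 2) + 2 * δ ^ 2 := by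
          push_cast; ring
        rw [e3]
        constructor <;> nlinarith [IH.1, IH.2]
    have hfin := hstep n le_rfl
    rw [hnδ] at hfin
    have hδ2 : δ ^ 2 ≤ 1 := by nlinarith
    have c1 := (hs n le_rfl 2 (by norm_num)).1
    have c2 := (hs 0 (Nat.zero_le _) (-1) (by norm_num)).1
    rw [hnδ] at c1
    simp only [Nat.cast_zero, zero_mul] at c2
    have e4 : (n : ℝ) * (2 * δ ^ 2) = 2 * δ := by
      have : (n : ℝ) * (2 * δ ^ 2) = 2 * δ * (n * δ) := by ring
      rw [this, hnδ, mul_one]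
    rw [e4] at hfin
    refine hfin.trans ?_
    nlinarith
  have ht : Tendsto (fun n : ℕ => C * (1 / (n : ℝ))) atTop (𝓝 (C * 0)) :=
    tendsto_one_div_atTop_nhds_zero_nat.const_mul C
  rw [mul_zero] at ht
  have h0 : |(F 1 - F 0) - (G 1 - G 0)| ≤ 0 :=
    ge_of_tendsto ht (eventually_atTop.2 ⟨1, fun n hn => key n (by omega)⟩)
  have := abs_eq_zero.1 (le_antisymm h0 (abs_nonneg _))
  linarith

/-! ### Moreau envelopes of a convex lower semicontinuous function -/

/-- `F` restricted to `D` is a proper lower semicontinuous convex function, `D` being its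
effective domain; `F` is irrelevant off `D`, and lower semicontinuity is closedness of the
epigraph. -/
structure ConvexLsc {X : Type*} [NormedAddCommGroup X] [NormedSpace ℝ X]
    (D : Set X) (F : X → ℝ) : Prop where
  nonempty : D.Nonempty
  convexOn : ConvexOn ℝ D F
  closed : IsClosed {q : X × ℝ | q.1 ∈ D ∧ F q.1 ≤ q.2}

/-- `p` is a Fenchel subgradient at `y` of the function equal to `F` on `D` and `+∞` off `D`. -/
def IsSubgrad {X : Type*} [NormedAddCommGroup X] [NormedSpace ℝ X]
    (D : Set X) (F : X → ℝ) (y : X) (p : X →L[ℝ] ℝ) : Prop :=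
  y ∈ D ∧ ∀ u ∈ D, F y + p (u - y) ≤ F u

/-- The Moreau envelope `w ↦ inf_{u ∈ D} (F u + N ‖w - u‖²)`. The infimum is real, hence not a
junk value, as soon as `N > 0` and `ConvexLsc D F`. -/
def envelope {X : Type*} [NormedAddCommGroup X] (D : Set X) (F : X → ℝ) (N : ℝ) (w : X) : ℝ :=
  sInf ((fun u => F u + N * ‖w - u‖ ^ 2) '' D)

section Envelope

variable {X : Type*} [NormedAddCommGroup X] [NormedSpace ℝ X] {D D' : Set X} {F G : X → ℝ}

theorem ConvexLsc.exists_ball (h : ConvexLsc D F) (x : X) {r : ℝ} (hr : x ∈ D → r < F x) :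
    ∃ δ > 0, ∀ u ∈ D, ‖u - x‖ < δ → r < F u := by
  have hmem : (x, r) ∈ {q : X × ℝ | q.1 ∈ D ∧ F q.1 ≤ q.2}ᶜ := fun hq => (hr hq.1).not_ge hq.2
  obtain ⟨δ, hδ, hball⟩ := Metric.isOpen_iff.1 h.closed.isOpen_compl _ hmem
  refine ⟨δ, hδ, fun u hu hd => ?_⟩
  by_contra! hcon
  have : (u, r) ∈ Metric.ball (x, r) δ := by
    rw [Metric.mem_ball, Prod.dist_eq, dist_eq_norm, dist_self]
    exact max_lt hd hδ
  exact hball this ⟨hu, hcon⟩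

/-- A conical lower bound: near a point of `D` this is lower semicontinuity, and convexity
propagates it along rays. -/
theorem ConvexLsc.exists_minorant (h : ConvexLsc D F) :
    ∃ K ≥ 0, ∀ u ∈ D, -K - K * ‖u‖ ≤ F u := by
  obtain ⟨x, hx⟩ := h.nonempty
  obtain ⟨δ, hδ, hb⟩ := h.exists_ball x (r := F x - 1) (fun _ => by linarith)
  have hcone : ∀ u ∈ D, F x - 1 - 2 / δ * ‖u - x‖ ≤ F u := by
    intro u hu
    by_cases hd : ‖u - x‖ < δ
    · have := hb u hu hd
      have : 0 ≤ 2 / δ * ‖u - x‖ := by positivity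
      linarith
    push Not at hd
    have hd0 : 0 < ‖u - x‖ := hδ.trans_le hd
    -- the point of the ray from `x` to `u` at distance `δ / 2` from `x`
    set t := δ / 2 / ‖u - x‖ with ht
    have ht0 : 0 < t := by positivity
    have ht1 : t ≤ 1 := by rw [ht, div_le_one hd0]; linarith
    have htd : t * ‖u - x‖ = δ / 2 := by rw [ht]; field_simp
    have hv := h.convexOn.2 hx hu (sub_nonneg.2 ht1) ht0.le (by ring)
    have hvD := h.convexOn.1 hx hu (sub_nonneg.2 ht1) ht0.le (by ring)
    have hvx : (1 - t) • x + t • u - x = t • (u - x) := by module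
    have hlow := hb _ hvD (by
      rw [hvx, norm_smul, Real.norm_of_nonneg ht0.le, htd]; linarith)
    simp only [smul_eq_mul] at hv
    have h1 : -1 ≤ t * (F u - F x) := by linarith
    have h2 : t * (2 / δ * ‖u - x‖) = 1 := by
      have : t * (2 / δ * ‖u - x‖) = 2 / δ * (t * ‖u - x‖) := by ring
      rw [this, htd]; field_simp
    have h3 : t * (-(2 / δ * ‖u - x‖)) ≤ t * (F u - F x) := by linarith
    have := le_of_mul_le_mul_left h3 ht0
    linarith
  refine ⟨2 / δ + |F x - 1 - 2 / δ * ‖x‖|, by positivity, fun u hu => ?_⟩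
  have h1 := hcone u hu
  have h2 : 2 / δ * ‖u - x‖ ≤ 2 / δ * (‖u‖ + ‖x‖) := by gcongr; exact norm_sub_le u x
  have h3 := neg_abs_le (F x - 1 - 2 / δ * ‖x‖)
  have h4 : 0 ≤ |F x - 1 - 2 / δ * ‖x‖| * ‖u‖ := by positivity
  have h5 : 0 ≤ 2 / δ := by positivity
  nlinarith

/-- The minorant bound at `u` in terms of the distance to a reference point `w`. -/
theorem minorant_dist {X : Type*} [NormedAddCommGroup X] {D : Set X} {F : X → ℝ}
    {K : ℝ} (hK : 0 ≤ K) (hF : ∀ u ∈ D, -K - K * ‖u‖ ≤ F u) (w : X) {u : X}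
    (hu : u ∈ D) : -K - K * ‖w‖ - K * ‖w - u‖ ≤ F u := by
  have h1 := hF u hu
  have h2 : ‖u‖ ≤ ‖w‖ + ‖w - u‖ := by
    have := norm_sub_le w (w - u)
    rwa [sub_sub_cancel] at this
  nlinarith

theorem ConvexLsc.bddBelow (h : ConvexLsc D F) {N : ℝ} (hN : 0 < N) (w : X) :
    BddBelow ((fun u => F u + N * ‖w - u‖ ^ 2) '' D) := by
  obtain ⟨K, hK, hF⟩ := h.exists_minorant
  refine ⟨-K - K * ‖w‖ - K ^ 2 / N, ?_⟩
  rintro _ ⟨u, hu, rfl⟩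
  have h1 := minorant_dist hK hF w hu
  have h2 : K * ‖w - u‖ ≤ N * ‖w - u‖ ^ 2 + K ^ 2 / N := by
    have e : K ^ 2 / N = N * (K / N) ^ 2 := by field_simp
    have e' : K * ‖w - u‖ = N * ((K / N) * ‖w - u‖) := by field_simp
    rw [e, e', ← mul_add]
    gcongr
    nlinarith [sq_nonneg (K / N - ‖w - u‖), sq_nonneg (K / N + ‖w - u‖)]
  simp only
  linarith

theorem ConvexLsc.envelope_le (h : ConvexLsc D F) {N : ℝ} (hN : 0 < N) (w : X) {u : X}
    (hu : u ∈ D) : envelope D F N w ≤ F u + N * ‖w - u‖ ^ 2 :=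
  csInf_le (h.bddBelow hN w) ⟨u, hu, rfl⟩

theorem ConvexLsc.envelope_le_self (h : ConvexLsc D F) {N : ℝ} (hN : 0 < N) {u : X}
    (hu : u ∈ D) : envelope D F N u ≤ F u := by
  simpa using h.envelope_le hN u hu

theorem ConvexLsc.exists_near (h : ConvexLsc D F) (N : ℝ) (w : X) {η : ℝ} (hη : 0 < η) :
    ∃ u ∈ D, F u + N * ‖w - u‖ ^ 2 < envelope D F N w + η := by
  obtain ⟨_, ⟨u, hu, rfl⟩, hlt⟩ :=
    exists_lt_of_csInf_lt (h.nonempty.image (fun u => F u + N * ‖w - u‖ ^ 2))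
      (lt_add_of_pos_right _ hη)
  exact ⟨u, hu, hlt⟩

/-- Near-minimisers in the infimum defining the envelope at `w` stay at bounded distance
from `w`, uniformly for `w` in a ball. -/
theorem ConvexLsc.exists_radius (h : ConvexLsc D F) {N : ℝ} (hN : 0 < N) (W : ℝ) :
    ∃ R ≥ 0, ∀ w, ‖w‖ ≤ W → ∀ u ∈ D, F u + N * ‖w - u‖ ^ 2 ≤ envelope D F N w + 1 →
      ‖w - u‖ ≤ R := by
  obtain ⟨K, hK, hF⟩ := h.exists_minorant
  obtain ⟨x, hx⟩ := h.nonempty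
  set A := F x + N * (W + ‖x‖) ^ 2 + 1 + K + K * W with hA
  refine ⟨(K + |A|) / N + 1, by positivity, fun w hw u hu hnear => ?_⟩
  have h1 := minorant_dist hK hF w hu
  have h2 := h.envelope_le hN w hx
  have h3 : N * ‖w - x‖ ^ 2 ≤ N * (W + ‖x‖) ^ 2 := by
    gcongr
    exact (norm_sub_le w x).trans (by linarith)
  have h4 : K * ‖w‖ ≤ K * W := by gcongr
  have h5 : N * ‖w - u‖ ^ 2 - K * ‖w - u‖ ≤ A := by linarith
  by_contra! hcon
  have h6 : K + |A| + N < N * ‖w - u‖ := by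
    have := mul_lt_mul_of_pos_left hcon hN
    have e : N * ((K + |A|) / N + 1) = K + |A| + N := by field_simp
    linarith
  have h7 : 1 ≤ ‖w - u‖ := by
    have : 0 ≤ (K + |A|) / N := by positivity
    linarith
  have h8 := le_abs_self A
  have h9 := abs_nonneg A
  nlinarith

/-- As `N → ∞` the envelopes recover the function, with value `+∞` off `D`. -/
theorem ConvexLsc.exists_le_envelope (h : ConvexLsc D F) (x : X) {r : ℝ}
    (hr : x ∈ D → r < F x) : ∃ N₀ > 0, ∀ N ≥ N₀, r ≤ envelope D F N x := by
  obtain ⟨K, hK, hF⟩ := h.exists_minorant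
  obtain ⟨δ, hδ, hb⟩ := h.exists_ball x hr
  set A := |r + K + K * ‖x‖| with hA
  have hA0 : 0 ≤ A := abs_nonneg _
  refine ⟨K / δ + A / δ ^ 2 + 1, by positivity, fun N hN => ?_⟩
  have hN0 : 0 < N := lt_of_lt_of_le (by positivity) hN
  refine le_csInf (h.nonempty.image _) ?_
  rintro _ ⟨u, hu, rfl⟩
  simp only
  by_cases hd : ‖u - x‖ < δ
  · have := hb u hu hd
    have : 0 ≤ N * ‖x - u‖ ^ 2 := by positivity
    linarith
  push Not at hd
  rw [norm_sub_rev] at hd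
  have h1 := minorant_dist hK hF x hu
  have h2 : K + A / δ ≤ N * δ := by
    have e : (K / δ + A / δ ^ 2) * δ = K + A / δ := by field_simp
    nlinarith
  have h3 : N * δ ≤ N * ‖x - u‖ := by gcongr
  have h4 : A / δ * δ = A := by field_simp
  have h5 : 0 ≤ A / δ := by positivity
  have h6 : A ≤ N * ‖x - u‖ ^ 2 - K * ‖x - u‖ := by nlinarith
  have h7 : r + K + K * ‖x‖ ≤ A := le_abs_self _
  linarith

/-! ### Integration of the Moreau envelopes -/

/-- Ekeland's principle followed by the sum rule: a near-minimiser `y` of `F + N ‖z - ·‖²` at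
which a subgradient `p` of `F` is, up to an `ε`-Lipschitz error, minus a subgradient of
`N ‖z - ·‖²`. -/
theorem ConvexLsc.exists_subgrad [CompleteSpace X] (h : ConvexLsc D F) {N : ℝ} (hN : 0 < N)
    (z : X) {ε : ℝ} (hε : 0 < ε) :
    ∃ y p, IsSubgrad D F y p ∧ F y + N * ‖z - y‖ ^ 2 ≤ envelope D F N z + 1 ∧
      ∀ u, N * ‖z - y‖ ^ 2 - p (u - y) ≤ N * ‖z - u‖ ^ 2 + ε * ‖u - y‖ := by
  set E : Set (X × ℝ) := {q | q.1 ∈ D ∧ F q.1 + N * ‖z - q.1‖ ^ 2 ≤ q.2} with hE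
  have hEc : IsClosed E := by
    have : E = (fun q : X × ℝ => (q.1, q.2 - N * ‖z - q.1‖ ^ 2)) ⁻¹'
        {q : X × ℝ | q.1 ∈ D ∧ F q.1 ≤ q.2} := by
      ext q
      simp [hE, le_sub_iff_add_le]
    rw [this]
    exact h.closed.preimage (by fun_prop)
  obtain ⟨u₀, hu₀, hlt⟩ := h.exists_near N z one_pos
  obtain ⟨⟨y, s⟩, ⟨hyD, hys⟩, hs0, hmin⟩ := ekeland hEc (m := envelope D F N z)
    (fun q hq => (h.envelope_le hN z hq.1).trans hq.2)
    (q₀ := (u₀, F u₀ + N * ‖z - u₀‖ ^ 2)) ⟨hu₀, le_rfl⟩ hε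
  simp only at hyD hys hs0 hmin
  have hH : ConvexOn ℝ univ fun u => N * ‖z - u‖ ^ 2 + ε * ‖u - y‖ := by
    have h1 : ConvexOn ℝ univ fun u => ‖z - u‖ := by
      simpa [dist_eq_norm, norm_sub_rev] using convexOn_univ_dist (E := X) z
    have h2 : ConvexOn ℝ univ fun u => ‖u - y‖ := by
      simpa [dist_eq_norm] using convexOn_univ_dist (E := X) y
    exact ((h1.pow (fun _ _ => norm_nonneg _) 2).smul hN.le).add (h2.smul hε.le)
  obtain ⟨p, hp1, hp2⟩ := exists_subgradient_of_min h.convexOn hH (by fun_prop) hyD (by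
    intro u hu
    have h1 := hmin (u, F u + N * ‖z - u‖ ^ 2) ⟨hu, le_rfl⟩
    simp only [dist_eq_norm, sub_self, norm_zero, mul_zero, add_zero] at h1 ⊢
    linarith)
  refine ⟨y, p, ⟨hyD, hp1⟩, by linarith, fun u => ?_⟩
  simpa using hp2 u

/-- A subgradient of `F` at `y` that nearly matches one of the quadratic term is an approximate
subgradient of the envelope at `z`. Here `y` need not nearly attain the envelope. -/
theorem ConvexLsc.envelope_slope (h : ConvexLsc D F) {N : ℝ} (hN : 0 < N) {z y : X}
    {p : X →L[ℝ] ℝ} (hp : IsSubgrad D F y p) {ε η R S W : ℝ} (hε : 0 < ε) (hη : 0 < η)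
    (hφ : ∀ u, N * ‖z - y‖ ^ 2 - p (u - y) ≤ N * ‖z - u‖ ^ 2 + ε * ‖u - y‖)
    (hR : ∀ w, ‖w‖ ≤ W → ∀ u ∈ D, F u + N * ‖w - u‖ ^ 2 ≤ envelope D F N w + 1 → ‖w - u‖ ≤ R)
    (hS : ‖z - y‖ ≤ S) (hεη : ε * (R + S) ≤ η / 2) {w : X} (hw : ‖w‖ ≤ W) :
    envelope D F N z + p (w - z) ≤ envelope D F N w + η := by
  obtain ⟨u, hu, hlt⟩ := h.exists_near N w (lt_min one_pos (half_pos hη))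
  have h1 := hR w hw u hu (by linarith [min_le_left 1 (η / 2)])
  have h2 := min_le_right 1 (η / 2)
  have h3 := hp.2 u hu
  have h4 := hφ (z - (w - u))
  have h5 := h.envelope_le hN z hp.1
  have e1 : z - (z - (w - u)) = w - u := by abel
  have e2 : z - (w - u) - y = (z - y) - (w - u) := by abel
  have e3 : p (z - (w - u) - y) = p (u - y) - p (w - z) := by
    rw [← map_sub]; congr 1; abel
  have h6 : ε * ‖z - (w - u) - y‖ ≤ ε * (R + S) := by
    rw [e2]
    gcongr
    exact (norm_sub_le _ _).trans (by linarith)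
  rw [e1, e3] at h4
  linarith

/-- Inclusion of subdifferentials passes to the envelopes as common approximate slopes, so the
envelopes have equal increments. -/
theorem envelope_sub_eq [CompleteSpace X] (hF : ConvexLsc D F) (hG : ConvexLsc D' G)
    (hsub : ∀ y p, IsSubgrad D F y p → IsSubgrad D' G y p) {N : ℝ} (hN : 0 < N) (a b : X) :
    envelope D F N b - envelope D F N a = envelope D' G N b - envelope D' G N a := by
  set W := ‖a‖ + 2 * ‖b - a‖ with hW
  have hline : ∀ t ∈ Icc (-1 : ℝ) 2, ‖a + t • (b - a)‖ ≤ W := by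
    intro t ht
    refine (norm_add_le _ _).trans ?_
    rw [norm_smul, hW]
    gcongr
    rw [Real.norm_eq_abs, abs_le]
    exact ⟨by linarith [ht.1], ht.2⟩
  obtain ⟨R, hR0, hR⟩ := hF.exists_radius hN W
  obtain ⟨R', hR'0, hR'⟩ := hG.exists_radius hN W
  have := increments_eq (F := fun t => envelope D F N (a + t • (b - a)))
    (G := fun t => envelope D' G N (a + t • (b - a))) (by
      intro η hη t ht
      set z := a + t • (b - a) with hz
      have hzW : ‖z‖ ≤ W := hline t ⟨by linarith [ht.1], by linarith [ht.2]⟩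
      set ε := η / 2 / (2 * R + R' + 1) with hε
      have hε0 : 0 < ε := by positivity
      have hεm : ε * (2 * R + R' + 1) = η / 2 := by rw [hε]; field_simp
      obtain ⟨y, p, hp, hnear, hφ⟩ := hF.exists_subgrad hN z hε0
      have hS := hR z hzW y hp.1 hnear
      refine ⟨p (b - a), fun τ hτ => ?_⟩
      have e : (τ - t) • (b - a) = a + τ • (b - a) - z := by rw [hz]; module
      have e' : p (b - a) * (τ - t) = p (a + τ • (b - a) - z) := by
        rw [← e, map_smul, smul_eq_mul, mul_comm]
      rw [e']
      exact ⟨hF.envelope_slope hN hp hε0 hη hφ hR hS (by nlinarith) (hline τ hτ),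
        hG.envelope_slope hN (hsub y p hp) hε0 hη hφ hR' hS (by nlinarith) (hline τ hτ)⟩)
  simpa using this

/-- Equal increments of all envelopes give, in the limit `N → ∞`, one inequality between the
increments of the functions; the reverse one follows by exchanging them. If `x₀ ∉ D'` the hypotheses
are contradictory, since the envelopes of `G` at `x₀` then tend to `+∞`. -/
theorem le_of_envelope_sub_eq (hF : ConvexLsc D F) (hG : ConvexLsc D' G)
    (henv : ∀ N > 0, ∀ a b, envelope D F N b - envelope D F N a =
      envelope D' G N b - envelope D' G N a)
    {x₀ : X} (hx₀ : x₀ ∈ D) {x : X} (hx : x ∈ D') :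
    x ∈ D ∧ F x - F x₀ ≤ G x - G x₀ := by
  have key : ∀ r, (x ∈ D → r < F x) → r - F x₀ ≤ G x - G x₀ := by
    intro r hr
    refine le_of_forall_pos_le_add fun δ hδ => ?_
    obtain ⟨N₁, hN₁, h1⟩ := hF.exists_le_envelope x hr
    obtain ⟨N₂, -, h2⟩ := hG.exists_le_envelope x₀ (r := G x₀ - δ) (fun _ => by linarith)
    have hN : 0 < max N₁ N₂ := lt_max_of_lt_left hN₁
    have h3 := h1 _ (le_max_left N₁ N₂)
    have h4 := h2 _ (le_max_right N₁ N₂)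
    have h5 := henv _ hN x₀ x
    have h6 := hF.envelope_le_self hN hx₀
    have h7 := hG.envelope_le_self hN hx
    linarith
  have hxD : x ∈ D := by
    by_contra hxD
    have := key (G x - G x₀ + F x₀ + 1) (fun h => absurd h hxD)
    linarith
  refine ⟨hxD, le_of_forall_pos_le_add fun δ hδ => ?_⟩
  have := key (F x - δ) (fun _ => by linarith)
  linarith

end Envelope

/-! ### Extended-real-valued functions -/

section EReal

variable {X : Type*} [NormedAddCommGroup X] [NormedSpace ℝ X] {f : X → EReal}

theorem coe_toReal_of_mem {X : Type*} {f : X → EReal} (hbot : ∀ y, f y ≠ ⊥) {x : X} (hx : f x ≠ ⊤) :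
    ((f x).toReal : EReal) = f x :=
  EReal.coe_toReal hx (hbot x)

/-- A function of class `Γ₀(X)` is described by its effective domain and its real values there. -/
theorem convexLsc_toReal (hbot : ∀ y, f y ≠ ⊥) (hdom : ∃ y, f y ≠ ⊤)
    (hlsc : LowerSemicontinuous f) (hconv : IsConvexE f) :
    ConvexLsc {x | f x ≠ ⊤} fun x => (f x).toReal := by
  have hcomb : ∀ x y, f x ≠ ⊤ → f y ≠ ⊤ → ∀ a b : ℝ, 0 < a → 0 < b → a + b = 1 →
      f (a • x + b • y) ≤ ((a * (f x).toReal + b * (f y).toReal : ℝ) : EReal) := by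
    intro x y hx hy a b ha hb hab
    have h1 := hconv x y a b ha hb hab
    rw [← coe_toReal_of_mem hbot hx, ← coe_toReal_of_mem hbot hy] at h1
    exact_mod_cast h1
  refine ⟨hdom, convexOn_iff_forall_pos.2 ⟨?_, ?_⟩, ?_⟩
  · rw [convex_iff_forall_pos]
    intro x hx y hy a b ha hb hab
    exact ne_top_of_le_ne_top (EReal.coe_ne_top _) (hcomb x y hx hy a b ha hb hab)
  · intro x hx y hy a b ha hb hab
    have h1 := hcomb x y hx hy a b ha hb hab
    have h2 : f (a • x + b • y) ≠ ⊤ := ne_top_of_le_ne_top (EReal.coe_ne_top _) h1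
    rw [← coe_toReal_of_mem hbot h2] at h1
    exact_mod_cast h1
  · have hepi : IsClosed {q : X × EReal | f q.1 ≤ q.2} := hlsc.isClosed_epigraph
    have : {q : X × ℝ | q.1 ∈ {x | f x ≠ ⊤} ∧ (f q.1).toReal ≤ q.2} =
        (fun q : X × ℝ => (q.1, (q.2 : EReal))) ⁻¹' {q : X × EReal | f q.1 ≤ q.2} := by
      ext ⟨u, s⟩
      simp only [mem_ofPred_eq, mem_preimage]
      constructor
      · rintro ⟨h1, h2⟩
        rw [← coe_toReal_of_mem hbot h1]
        exact_mod_cast h2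
      · intro h
        have h1 : f u ≠ ⊤ := ne_top_of_le_ne_top (EReal.coe_ne_top _) h
        rw [← coe_toReal_of_mem hbot h1] at h
        exact ⟨h1, by exact_mod_cast h⟩
    rw [this]
    exact hepi.preimage (continuous_fst.prodMk (continuous_coe_real_ereal.comp continuous_snd))

theorem mem_esub_zero_iff [CompleteSpace X] (hbot : ∀ y, f y ≠ ⊥) (y : X) (p : X →L[ℝ] ℝ) :
    p ∈ esub X f 0 y ↔ IsSubgrad {x | f x ≠ ⊤} (fun x => (f x).toReal) y p := by
  constructor
  · rintro ⟨-, htop, -, h⟩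
    refine ⟨htop, fun u hu => ?_⟩
    have h1 : ((p u : EReal) - f u) + f y ≤ (p y : EReal) + ((0 : ℝ) : EReal) :=
      (add_le_add_left (le_iSup (fun x => (p x : EReal) - f x) u) _).trans h
    rw [← coe_toReal_of_mem hbot htop, ← coe_toReal_of_mem hbot hu] at h1
    have h2 : (p u - (f u).toReal) + (f y).toReal ≤ p y + 0 := by exact_mod_cast h1
    simp only [map_sub]
    linarith
  · rintro ⟨htop, h⟩
    refine ⟨le_rfl, htop, hbot y, ?_⟩
    have h1 : conj X f p ≤ ((p y - (f y).toReal : ℝ) : EReal) := by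
      refine iSup_le fun u => ?_
      by_cases hu : f u = ⊤
      · simp [hu]
      · have h2 := h u hu
        simp only [map_sub] at h2
        rw [← coe_toReal_of_mem hbot hu]
        have h3 : p u - (f u).toReal ≤ p y - (f y).toReal := by linarith
        exact_mod_cast h3
    refine (add_le_add_left h1 _).trans ?_
    have e : f y = ((f y).toReal : EReal) := (coe_toReal_of_mem hbot htop).symm
    rw [e, EReal.toReal_coe]
    have h4 : p y - (f y).toReal + (f y).toReal ≤ p y + 0 := by linarith
    exact_mod_cast h4

end EReal

/-- Proposition roctem(ii), Rockafellar's integration theorem: let `X` be a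
Banach space and `f, g ∈ Γ₀(X)` with `∂f(x) ⊆ ∂g(x)` for all `x ∈ X`. Then `g = f + c` for
some constant `c ∈ ℝ`. -/
theorem subdiff_inclusion_integration_banach
    (f g : X → EReal)
    (hfbot : ∀ y : X, f y ≠ ⊥) (hfdom : ∃ y : X, f y ≠ ⊤)
    (hflsc : LowerSemicontinuous f) (hfconv : IsConvexE f)
    (hgbot : ∀ y : X, g y ≠ ⊥) (hgdom : ∃ y : X, g y ≠ ⊤)
    (hglsc : LowerSemicontinuous g) (hgconv : IsConvexE g)
    (hsub : ∀ x : X, esub X f 0 x ⊆ esub X g 0 x) :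
    ∃ c : ℝ, ∀ x : X, g x = f x + (c : EReal) := by
  set D := {x | f x ≠ ⊤} with hD
  set D' := {x | g x ≠ ⊤} with hD'
  set F : X → ℝ := fun x => (f x).toReal with hFdef
  set G : X → ℝ := fun x => (g x).toReal with hGdef
  have hF : ConvexLsc D F := convexLsc_toReal hfbot hfdom hflsc hfconv
  have hG : ConvexLsc D' G := convexLsc_toReal hgbot hgdom hglsc hgconv
  have hsub' : ∀ y p, IsSubgrad D F y p → IsSubgrad D' G y p := fun y p hp =>
    (mem_esub_zero_iff hgbot y p).1 (hsub y ((mem_esub_zero_iff hfbot y p).2 hp))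
  have henv : ∀ N > 0, ∀ a b, envelope D F N b - envelope D F N a =
      envelope D' G N b - envelope D' G N a :=
    fun N hN a b => envelope_sub_eq hF hG hsub' hN a b
  -- a point where `f` has a subgradient lies in both domains
  obtain ⟨x₀, p, hp, -, -⟩ := hF.exists_subgrad one_pos 0 one_pos
  have hx₀ : x₀ ∈ D := hp.1
  have hx₀' : x₀ ∈ D' := (hsub' x₀ p hp).1
  refine ⟨G x₀ - F x₀, fun x => ?_⟩
  by_cases hx : x ∈ D
  · obtain ⟨hx', h1⟩ := le_of_envelope_sub_eq hG hF
      (fun N hN a b => (henv N hN a b).symm) hx₀' hx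
    obtain ⟨-, h2⟩ := le_of_envelope_sub_eq hF hG henv hx₀ hx'
    rw [← coe_toReal_of_mem hfbot hx, ← coe_toReal_of_mem hgbot hx']
    have h3 : G x = F x + (G x₀ - F x₀) := by linarith
    exact_mod_cast h3
  · have hx' : x ∉ D' := fun hx' =>
      hx (le_of_envelope_sub_eq hF hG henv hx₀ hx').1
    have e1 : f x = ⊤ := not_not.1 hx
    have e2 : g x = ⊤ := not_not.1 hx'
    rw [e1, e2, EReal.top_add_coe]

end
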